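/- arXiv:2212.05426 — 2 statements merged into one kernel-verified Lean document; each statement's English description precedes it below -/
import Mathlib

section
/- Let l ≥ 2 be an integer and let p ≥ 2 be an even integer. Then for every finite real sequence b = (b_A)_{A∈Z_l}: ‖Σ_{A∈Z_l} b_A w_A‖_p ≤ √(l!) · (p! · μ_{l,p}(full))^{1/p} · ‖b‖. -/
/-!
Expand `∫ (∑ b_A w_A)^p` as a sum over `p`-tuples `(A_1, …, A_p)`. Since `r_n² = 1` almost
everywhere, `∏ w_{A_i}` is almost everywhere the Walsh function of the set of points lying in an
odd number of the `A_i`, so only the even-coverings contribute (`integral_pow_le_sum_even`).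

Every even-covering is the image of a double-covering `(D_1, …, D_p)` by sets of the same
cardinality: the occurrences of each point are grouped into pairs and the pairs are separated
(`exists_split`). Up to isomorphism and reordering there are at most `p! μ_{l,p}(full)` tuples `D`
to consider. For a fixed `D` with union `U`, every variable of the sum of `∏ |b_{φ(D_i)}|` over maps
`φ` on `U` occurs in exactly two factors, so summing one variable at a time with the Cauchy–Schwarz
inequality (`sum_prod_le_prod_sqrt`) bounds it by the product of the `ℓ²`-norms of the factors.
Each of these norms is at most `√(l!) ‖b‖`, because a given `A` is `φ(D_i)` for at most `l!` maps
`φ` on `D_i` (`sum_gridSet_sq_le`). Hence the integral is at most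
`p! μ_{l,p}(full) (√(l!) ‖b‖)^p` (`sum_even_le`).

The number `μ_{l,p}(full)` is a `Nat.card`, so the argument also needs the set of isomorphism
classes to be finite (`finite_dClass`).
-/

/-- The union of all member sets of a set-collection. -/
def unionC (C : Multiset (Finset ℕ)) : Finset ℕ := C.sup

/-- A set-collection is a double-covering if every point of its union lies in
exactly two member sets (counted with multiplicity). -/
def IsDoubleCover (C : Multiset (Finset ℕ)) : Prop :=
  ∀ a ∈ unionC C, Multiset.countP (fun A => a ∈ A) C = 2

/-- A set-collection is an even-covering if every point of its union lies in an
even number of member sets (counted with multiplicity). -/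
def IsEvenCover (C : Multiset (Finset ℕ)) : Prop :=
  ∀ a ∈ unionC C, Even (Multiset.countP (fun A => a ∈ A) C)

/-- Two set-collections are isomorphic: there is a bijection between their
unions mapping the first multiset of sets onto the second. -/
def Isomorphic (C D : Multiset (Finset ℕ)) : Prop :=
  ∃ φ : ℕ → ℕ, Set.BijOn φ ↑(unionC C) ↑(unionC D) ∧
    C.map (Finset.image φ) = D

/-- A set-collection is connected if any two member sets are joined by a chain
of member sets with consecutive nonempty intersections. -/
def ConnectedColl (C : Multiset (Finset ℕ)) : Prop :=
  ∀ A ∈ C, ∀ B ∈ C,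
    Relation.ReflTransGen (fun X Y => X ∈ C ∧ Y ∈ C ∧ (X ∩ Y).Nonempty) A B

/-- `D` is a connected component of `C`: a nonempty connected sub-multiset
separated from the rest of `C`. -/
def IsComponent (C D : Multiset (Finset ℕ)) : Prop :=
  D ≤ C ∧ D ≠ 0 ∧ ConnectedColl D ∧ ∀ B ∈ C - D, ∀ A ∈ D, B ∩ A = ∅

/-- A set-collection is standard if no two of its distinct connected components
are isomorphic. -/
def IsStandard (C : Multiset (Finset ℕ)) : Prop :=
  ∀ D E : Multiset (Finset ℕ),
    IsComponent C D → IsComponent C E → D ≠ E → ¬ Isomorphic D E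

/-- `μ_{l,p}(full)`: the number of isomorphism classes of double-coverings of
`p` sets each of cardinality `l`. -/
noncomputable def muFull (l p : ℕ) : ℕ :=
  Nat.card (Quot (fun C D : {C : Multiset (Finset ℕ) //
      Multiset.card C = p ∧ IsDoubleCover C ∧ ∀ A ∈ C, A.card = l} =>
    Isomorphic C.1 D.1))

/-- `μ_{l,p}(standard)`: the number of isomorphism classes of standard
double-coverings of `p` sets each of cardinality `l`. -/
noncomputable def muStandard (l p : ℕ) : ℕ :=
  Nat.card (Quot (fun C D : {C : Multiset (Finset ℕ) //
      Multiset.card C = p ∧ IsDoubleCover C ∧ IsStandard C ∧ ∀ A ∈ C, A.card = l} =>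
    Isomorphic C.1 D.1))

/-- `μ*_{l,p}(full)`: the number of isomorphism classes of double-coverings of
`p` sets each of cardinality between `1` and `l`. -/
noncomputable def muStarFull (l p : ℕ) : ℕ :=
  Nat.card (Quot (fun C D : {C : Multiset (Finset ℕ) //
      Multiset.card C = p ∧ IsDoubleCover C ∧ ∀ A ∈ C, 1 ≤ A.card ∧ A.card ≤ l} =>
    Isomorphic C.1 D.1))

/-- The family `D_{l,p}` of double-coverings of `p` sets of cardinality `l`
contained in `{1,…,pl/2}`. -/
def Dfull (l p : ℕ) : Set (Multiset (Finset ℕ)) :=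
  {C | Multiset.card C = p ∧ IsDoubleCover C ∧
    (∀ A ∈ C, A ⊆ Finset.Icc 1 (p * l / 2)) ∧ ∀ A ∈ C, A.card = l}

/-- The family `D*_{l,p}` of double-coverings of `p` sets of cardinality
between `1` and `l` contained in `{1,…,pl/2}`. -/
def Dstar (l p : ℕ) : Set (Multiset (Finset ℕ)) :=
  {C | Multiset.card C = p ∧ IsDoubleCover C ∧
    (∀ A ∈ C, A ⊆ Finset.Icc 1 (p * l / 2)) ∧ ∀ A ∈ C, 1 ≤ A.card ∧ A.card ≤ l}

/-- The Rademacher function `r_n(x) = sign (sin (2^n π x))`. -/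
noncomputable def rademacher (n : ℕ) (x : ℝ) : ℝ :=
  Real.sign (Real.sin (2 ^ n * Real.pi * x))

/-- The Walsh function `w_A = ∏_{k ∈ A} r_k`. -/
noncomputable def walsh (A : Finset ℕ) (x : ℝ) : ℝ :=
  ∏ k ∈ A, rademacher k x

/-! ### A Cauchy–Schwarz inequality for doubly covered variables -/

/-- The points of `ι → ℕ` whose coordinates in `s` range over `T` and whose other coordinates
are those of `x`. Summing over this set is integrating out the variables in `s`. -/
def gridSet {ι : Type*} [Fintype ι] [DecidableEq ι] (T : Finset ℕ) (s : Finset ι) (x : ι → ℕ) :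
    Finset (ι → ℕ) :=
  Fintype.piFinset fun i => if i ∈ s then T else {x i}

section Grid

open Finset Function

variable {ι κ : Type*} [Fintype ι] [DecidableEq ι] [Fintype κ] [DecidableEq κ]

theorem mem_gridSet {T : Finset ℕ} {s : Finset ι} {x y : ι → ℕ} :
    y ∈ gridSet T s x ↔ (∀ i ∈ s, y i ∈ T) ∧ ∀ i, i ∉ s → y i = x i := by
  unfold gridSet
  rw [Fintype.mem_piFinset]
  constructor
  · intro h
    exact ⟨fun i hi => by simpa [hi] using h i, fun i hi => by simpa [hi] using h i⟩
  · rintro ⟨h1, h2⟩ i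
    by_cases hi : i ∈ s
    · simpa [hi] using h1 i hi
    · simpa [hi] using h2 i hi

theorem sum_gridSet_insert {T : Finset ℕ} {s : Finset ι} {a : ι} (ha : a ∉ s) (x : ι → ℕ)
    (F : (ι → ℕ) → ℝ) :
    ∑ y ∈ gridSet T (insert a s) x, F y =
      ∑ t ∈ T, ∑ y ∈ gridSet T s (update x a t), F y := by
  rw [← sum_fiberwise_of_maps_to (s := gridSet T (insert a s) x) (t := T) (g := fun y => y a)
    (fun y hy => (mem_gridSet.1 hy).1 a (mem_insert_self a s))]
  refine sum_congr rfl fun t ht => sum_congr ?_ fun _ _ => rfl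
  ext y
  simp only [mem_filter, mem_gridSet, mem_insert]
  constructor
  · rintro ⟨⟨h1, h2⟩, h3⟩
    refine ⟨fun i hi => h1 i (Or.inr hi), fun i hi => ?_⟩
    by_cases hia : i = a
    · subst hia; simpa using h3
    · rw [update_of_ne hia]; exact h2 i (by tauto)
  · rintro ⟨h1, h2⟩
    have h3 : y a = t := by simpa using h2 a ha
    refine ⟨⟨?_, ?_⟩, h3⟩
    · rintro i (rfl | hi)
      · rw [h3]; exact ht
      · exact h1 i hi
    · intro i hi
      have := h2 i (by tauto)
      rwa [update_of_ne (by tauto)] at this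

theorem sum_gridSet_update {T : Finset ℕ} {s : Finset ι} {a : ι} (ha : a ∉ s) (x : ι → ℕ) (t : ℕ)
    (F : (ι → ℕ) → ℝ) (hF : ∀ y t, F (update y a t) = F y) :
    ∑ y ∈ gridSet T s (update x a t), F y = ∑ y ∈ gridSet T s x, F y := by
  have key : ∀ (z : ι → ℕ) (t t' : ℕ), ∀ y ∈ gridSet T s (update z a t),
      update y a t' ∈ gridSet T s (update z a t') := by
    intro z t t' y hy
    rw [mem_gridSet] at hy ⊢
    refine ⟨fun i hi => ?_, fun i hi => ?_⟩
    · rw [update_of_ne (by rintro rfl; exact ha hi)]; exact hy.1 i hi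
    · by_cases hia : i = a
      · subst hia; simp
      · have := hy.2 i hi
        rw [update_of_ne hia] at this ⊢
        rw [this, update_of_ne hia]
  have back : ∀ (z : ι → ℕ) (t t' : ℕ), ∀ y ∈ gridSet T s (update z a t),
      update (update y a t') a t = y := by
    intro z t t' y hy
    have h : y a = t := by simpa using (mem_gridSet.1 hy).2 a ha
    rw [update_idem, ← h, update_eq_self]
  have hx : gridSet T s x = gridSet T s (update x a (x a)) := by rw [update_eq_self]
  rw [hx]
  exact sum_nbij' (fun y => update y a (x a)) (fun y => update y a t)
    (key x t (x a)) (key x (x a) t) (back x t (x a)) (back x (x a) t)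
    (fun y _ => (hF y _).symm)

/-- If `f k` depends only on the variables in `D k` and every variable lies in exactly two of the
sets `D k`, then the sum of `∏ k, f k` is at most the product of the `ℓ²`-norms of the `f k`.
The variables are summed one at a time; each time the Cauchy–Schwarz inequality is applied to the
two factors containing the variable. -/
theorem sum_prod_le_prod_sqrt (T : Finset ℕ) (D : κ → Finset ι) (f : κ → (ι → ℕ) → ℝ)
    (hf : ∀ k a, a ∉ D k → ∀ y t, f k (update y a t) = f k y)
    (hf0 : ∀ k y, 0 ≤ f k y)
    (h2 : ∀ a, (univ.filter fun k => a ∈ D k).card = 2) (s : Finset ι) :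
    ∀ x, ∑ y ∈ gridSet T s x, ∏ k, f k y ≤
      ∏ k, Real.sqrt (∑ y ∈ gridSet T (s ∩ D k) x, f k y ^ 2) := by
  induction s using Finset.induction_on with
  | empty =>
    intro x
    have h0 : gridSet T ∅ x = {x} := by
      ext y; rw [mem_gridSet]; simp [funext_iff]
    simp [h0, Real.sqrt_sq (hf0 _ _)]
  | insert a s ha ih =>
    intro x
    rw [sum_gridSet_insert ha]
    refine (sum_le_sum fun t _ => ih (update x a t)).trans ?_
    obtain ⟨k₁, k₂, hk, hkk⟩ := card_eq_two.1 (h2 a)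
    have hmem : ∀ k, a ∈ D k ↔ k ∈ ({k₁, k₂} : Finset κ) := fun k => by rw [← hkk]; simp
    have hsplit : ∀ g : κ → ℝ, ∏ k, g k = (∏ k ∈ ({k₁, k₂} : Finset κ)ᶜ, g k) * (g k₁ * g k₂) := by
      intro g
      rw [← prod_pair (f := g) hk, prod_compl_mul_prod]
    simp only [hsplit]
    have hout : ∀ k ∈ ({k₁, k₂} : Finset κ)ᶜ, ∀ t,
        ∑ y ∈ gridSet T (s ∩ D k) (update x a t), f k y ^ 2 =
        ∑ y ∈ gridSet T (insert a s ∩ D k) x, f k y ^ 2 := by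
      intro k hk' t
      have hak : a ∉ D k := fun h => (mem_compl.1 hk') ((hmem k).1 h)
      rw [insert_inter_of_notMem hak]
      exact sum_gridSet_update (fun h => ha (mem_inter.1 h).1) x t _
        (fun y t => by rw [hf k a hak])
    have hin : ∀ k, a ∈ D k →
        ∑ t ∈ T, ∑ y ∈ gridSet T (s ∩ D k) (update x a t), f k y ^ 2 =
        ∑ y ∈ gridSet T (insert a s ∩ D k) x, f k y ^ 2 := by
      intro k hak
      rw [insert_inter_of_mem hak, sum_gridSet_insert (fun h => ha (mem_inter.1 h).1)]
    have e1 : ∀ t, ∏ k ∈ ({k₁, k₂} : Finset κ)ᶜ,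
        Real.sqrt (∑ y ∈ gridSet T (s ∩ D k) (update x a t), f k y ^ 2) =
        ∏ k ∈ ({k₁, k₂} : Finset κ)ᶜ,
        Real.sqrt (∑ y ∈ gridSet T (insert a s ∩ D k) x, f k y ^ 2) := fun t =>
      prod_congr rfl fun k hk' => by rw [hout k hk']
    simp only [e1]
    rw [← mul_sum, ← hin k₁ ((hmem _).2 (by simp)), ← hin k₂ ((hmem _).2 (by simp))]
    refine mul_le_mul_of_nonneg_left ?_ (prod_nonneg fun _ _ => Real.sqrt_nonneg _)
    exact Real.sum_sqrt_mul_sqrt_le _ (fun _ => sum_nonneg fun _ _ => sq_nonneg _)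
      (fun _ => sum_nonneg fun _ _ => sq_nonneg _)

end Grid

/-! ### Integrals of Walsh functions -/

section Walsh

open MeasureTheory Finset

theorem measurable_rademacher (n : ℕ) : Measurable (rademacher n) := by
  have hs : Measurable Real.sign := by
    unfold Real.sign
    exact Measurable.ite measurableSet_Iio measurable_const
      (Measurable.ite measurableSet_Ioi measurable_const measurable_const)
  exact hs.comp (Real.measurable_sin.comp (measurable_const.mul measurable_id))

theorem abs_rademacher_le (n : ℕ) (x : ℝ) : |rademacher n x| ≤ 1 := by
  unfold rademacher
  rcases Real.sign_apply_eq (Real.sin (2 ^ n * Real.pi * x)) with h | h | h <;> simp [h]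

theorem measurable_walsh (A : Finset ℕ) : Measurable (walsh A) := by
  unfold walsh
  exact Finset.measurable_fun_prod _ fun n _ => measurable_rademacher n

theorem abs_walsh_le (A : Finset ℕ) (x : ℝ) : |walsh A x| ≤ 1 := by
  unfold walsh
  rw [abs_prod]
  exact prod_le_one (fun _ _ => abs_nonneg _) fun _ _ => abs_rademacher_le _ _

/-- The zeros of a Rademacher function are dyadic rationals, hence negligible. -/
theorem ae_rademacher_sq : ∀ᵐ x : ℝ, ∀ n, rademacher n x ^ 2 = 1 := by
  rw [ae_all_iff]
  intro n
  have hc : (Set.range fun k : ℤ => (k : ℝ) / 2 ^ n).Countable := Set.countable_range _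
  filter_upwards [hc.ae_notMem volume] with x hx
  have hne : Real.sin (2 ^ n * Real.pi * x) ≠ 0 := by
    intro h
    obtain ⟨k, hk⟩ := Real.sin_eq_zero_iff.1 h
    refine hx ⟨k, ?_⟩
    have hpi := Real.pi_ne_zero
    have h2 : (2 : ℝ) ^ n ≠ 0 := by positivity
    have : (k : ℝ) = 2 ^ n * x := by
      apply mul_right_cancel₀ hpi
      rw [hk]; ring
    simp only [this]
    field_simp
  unfold rademacher
  rcases Real.sign_apply_eq_of_ne_zero _ hne with h | h <;> simp [h]

theorem rademacher_add_of_lt {m n : ℕ} (h : m < n) (x : ℝ) :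
    rademacher n (x + 1 / 2 ^ m) = rademacher n x := by
  obtain ⟨k, rfl⟩ := Nat.exists_eq_add_of_lt h
  unfold rademacher
  have : (2 : ℝ) ^ (m + k + 1) * Real.pi * (x + 1 / 2 ^ m) =
      2 ^ (m + k + 1) * Real.pi * x + ((2 ^ k : ℕ) : ℝ) * (2 * Real.pi) := by
    push_cast
    have h2 : (2 : ℝ) ^ m ≠ 0 := by positivity
    field_simp
    ring
  rw [this, Real.sin_add_nat_mul_two_pi]

theorem rademacher_add_self (m : ℕ) (x : ℝ) :
    rademacher m (x + 1 / 2 ^ m) = -rademacher m x := by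
  unfold rademacher
  have : (2 : ℝ) ^ m * Real.pi * (x + 1 / 2 ^ m) = 2 ^ m * Real.pi * x + Real.pi := by
    have h2 : (2 : ℝ) ^ m ≠ 0 := by positivity
    field_simp
  rw [this, Real.sin_add_pi, Real.sign_neg]

/-- With `m = min B`, the translation by `2⁻ᵐ` flips the sign of `r_m` and fixes `r_n` for the
other `n ∈ B`, so it turns the `1`-periodic function `w_B` into `-w_B`. -/
theorem integral_walsh_eq_zero {B : Finset ℕ} (hB : B.Nonempty) (h1 : ∀ n ∈ B, 1 ≤ n) :
    ∫ x in (0:ℝ)..1, walsh B x = 0 := by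
  set m := B.min' hB with hm
  have hmB : m ∈ B := B.min'_mem hB
  have hshift : ∀ x, walsh B (x + 1 / 2 ^ m) = -walsh B x := by
    intro x
    unfold walsh
    rw [← mul_prod_erase _ _ hmB, ← mul_prod_erase _ _ hmB, rademacher_add_self, neg_mul]
    congr 2
    refine prod_congr rfl fun n hn => rademacher_add_of_lt ?_ x
    exact lt_of_le_of_ne (B.min'_le n (mem_of_mem_erase hn)) (ne_of_mem_erase hn).symm
  have hper : Function.Periodic (walsh B) 1 := by
    intro x
    unfold walsh
    refine prod_congr rfl fun n hn => ?_
    have := rademacher_add_of_lt (m := 0) (h1 n hn) x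
    simpa using this
  have e1 : ∫ x in (0:ℝ)..1, walsh B (x + 1 / 2 ^ m) = ∫ x in (0:ℝ)..1, walsh B x := by
    rw [intervalIntegral.integral_comp_add_right]
    have := hper.intervalIntegral_add_eq (0 + 1 / 2 ^ m) 0
    rw [show (0 : ℝ) + 1 = 1 by norm_num] at this
    rw [← this]; congr 1; ring
  simp only [hshift, intervalIntegral.integral_neg] at e1
  linarith

/-- A product of Walsh functions is, almost everywhere, the Walsh function of the set of points
covered an odd number of times, whose integral vanishes if that set is nonempty. -/
theorem integral_prod_walsh_eq_zero {p : ℕ} (A : Fin p → Finset ℕ) (h1 : ∀ i, ∀ n ∈ A i, 1 ≤ n)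
    (hodd : ∃ n, ¬ Even (univ.filter fun i => n ∈ A i).card) :
    ∫ x in (0:ℝ)..1, ∏ i, walsh (A i) x = 0 := by
  set U := univ.biUnion A
  set B := U.filter fun n => ¬ Even (univ.filter fun i => n ∈ A i).card with hBdef
  have hB : B.Nonempty := by
    obtain ⟨n, hn⟩ := hodd
    refine ⟨n, mem_filter.2 ⟨?_, hn⟩⟩
    by_contra hU
    apply hn
    rw [filter_false_of_mem]
    · simp
    · intro i _ hi
      exact hU (mem_biUnion.2 ⟨i, mem_univ i, hi⟩)
  have hB1 : ∀ n ∈ B, 1 ≤ n := by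
    intro n hn
    obtain ⟨i, _, hi⟩ := mem_biUnion.1 (mem_filter.1 hn).1
    exact h1 i n hi
  refine Eq.trans (intervalIntegral.integral_congr_ae ?_) (integral_walsh_eq_zero hB hB1)
  filter_upwards [ae_rademacher_sq] with x hx _
  have e : ∀ i, walsh (A i) x = ∏ n ∈ U, if n ∈ A i then rademacher n x else 1 := by
    intro i
    unfold walsh
    rw [prod_ite_mem, inter_eq_right.2 (subset_biUnion_of_mem A (mem_univ i))]
  simp only [e]
  rw [prod_comm]
  unfold walsh
  rw [hBdef, prod_filter]
  refine prod_congr rfl fun n _ => ?_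
  rw [← prod_filter, prod_const]
  split_ifs with h
  · obtain ⟨k, hk⟩ := h
    rw [hk, ← two_mul, pow_mul, hx, one_pow]
  · obtain ⟨k, hk⟩ := Nat.not_even_iff_odd.1 h
    rw [hk, pow_succ, pow_mul, hx, one_pow, one_mul]

theorem intervalIntegrable_prod_walsh {p : ℕ} (A : Fin p → Finset ℕ) :
    IntervalIntegrable (fun x => ∏ i, walsh (A i) x) volume 0 1 := by
  have hm : Measurable fun x => ∏ i, walsh (A i) x :=
    Finset.measurable_fun_prod _ fun i _ => measurable_walsh _
  have hc : IntervalIntegrable (fun _ : ℝ => (1 : ℝ)) volume 0 1 := intervalIntegrable_const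
  refine hc.mono_fun' hm.aestronglyMeasurable
    (Filter.Eventually.of_forall fun x => ?_)
  simp only [Real.norm_eq_abs, abs_prod]
  exact prod_le_one (fun _ _ => abs_nonneg _) fun _ _ => abs_walsh_le _ _

theorem abs_integral_prod_walsh_le {p : ℕ} (A : Fin p → Finset ℕ) :
    |∫ x in (0:ℝ)..1, ∏ i, walsh (A i) x| ≤ 1 := by
  have := intervalIntegral.norm_integral_le_of_norm_le_const (a := (0:ℝ)) (b := 1) (C := 1)
    (f := fun x => ∏ i, walsh (A i) x) (fun x _ => by
      simp only [Real.norm_eq_abs, abs_prod]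
      exact prod_le_one (fun _ _ => abs_nonneg _) fun _ _ => abs_walsh_le _ _)
  simpa using this

open Classical in
/-- When the power is expanded and integrated termwise, only the tuples covering every point an
even number of times contribute, each by at most `∏ i, |b (A i)|`. -/
theorem integral_pow_le_sum_even {p : ℕ} (hpe : Even p) (S : Finset (Finset ℕ))
    (hS : ∀ A ∈ S, ∀ n ∈ A, 1 ≤ n) (b : Finset ℕ → ℝ) :
    ∫ x in (0:ℝ)..1, |∑ A ∈ S, b A * walsh A x| ^ p ≤
      ∑ A ∈ (Fintype.piFinset fun _ : Fin p => S) with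
        ∀ n, Even (univ.filter fun i => n ∈ A i).card, ∏ i, |b (A i)| := by
  classical
  have hexp : ∀ x, |∑ A ∈ S, b A * walsh A x| ^ p =
      ∑ A ∈ Fintype.piFinset fun _ : Fin p => S, (∏ i, b (A i)) * ∏ i, walsh (A i) x := by
    intro x
    rw [hpe.pow_abs, sum_pow']
    simp only [prod_mul_distrib]
  simp only [hexp]
  rw [intervalIntegral.integral_finsetSum
    fun A _ => (intervalIntegrable_prod_walsh A).const_mul _, sum_filter]
  refine sum_le_sum fun A hA => ?_
  rw [intervalIntegral.integral_const_mul]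
  split_ifs with h
  · refine (le_abs_self _).trans ?_
    rw [abs_mul, abs_prod]
    exact mul_le_of_le_one_right (prod_nonneg fun _ _ => abs_nonneg _)
      (abs_integral_prod_walsh_le A)
  · rw [integral_prod_walsh_eq_zero A (fun i => hS _ (Fintype.mem_piFinset.1 hA i))
      (not_forall.1 h), mul_zero]

end Walsh

/-! ### Splitting even-coverings into double-coverings -/

section Split

open Finset

theorem exists_enumeration {κ : Type*} (s : Finset κ) :
    ∃ e : κ → ℕ, Set.InjOn e s ∧ s.image e = range s.card := by
  classical
  have hinj : Set.InjOn (fun k => if h : k ∈ s then (s.equivFin ⟨k, h⟩ : ℕ) else 0) s := by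
    intro i hi j hj hij
    have hi' : i ∈ s := hi
    have hj' : j ∈ s := hj
    simp only [hi', hj', dif_pos] at hij
    simpa using s.equivFin.injective (Fin.ext hij)
  refine ⟨_, hinj, eq_of_subset_of_card_le ?_ ?_⟩
  · intro n hn
    obtain ⟨k, hk, rfl⟩ := mem_image.1 hn
    simp [hk]
  · rw [card_image_of_injOn hinj, card_range]

/-- A set with an even number of elements can be partitioned into pairs. -/
theorem exists_pairing {κ : Type*} (s : Finset κ) (hs : Even s.card) :
    ∃ g : κ → ℕ, ∀ i ∈ s, (s.filter fun j => g j = g i).card = 2 := by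
  obtain ⟨e, he, him⟩ := exists_enumeration s
  refine ⟨fun k => e k / 2, fun i hi => ?_⟩
  have h1 : e i < s.card := by
    rw [← mem_range, ← him]; exact mem_image_of_mem e hi
  rw [← card_image_of_injOn (f := e) (he.mono fun j hj => (mem_filter.1 hj).1)]
  have h2 : (s.filter fun j => e j / 2 = e i / 2).image e =
      (range s.card).filter fun n => n / 2 = e i / 2 := by
    rw [← him, filter_image]
  have h3 : ((range s.card).filter fun n => n / 2 = e i / 2) =
      {2 * (e i / 2), 2 * (e i / 2) + 1} := by
    obtain ⟨m, hm⟩ := hs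
    ext n
    simp only [mem_filter, mem_range, mem_insert, mem_singleton]
    omega
  rw [h2, h3, card_pair (by omega)]

/-- Every even-covering is the image of a double-covering under a map that is injective on each
member set: the copies of a point `a` are grouped into pairs, and each pair gets its own copy of
`a`, encoded as `Nat.pair a k`. -/
theorem exists_split {p : ℕ} (A : Fin p → Finset ℕ)
    (hA : ∀ n, Even (univ.filter fun i => n ∈ A i).card) :
    ∃ (D : Fin p → Finset ℕ) (φ : ℕ → ℕ), (∀ i, (D i).image φ = A i) ∧
      (∀ i, (D i).card = (A i).card) ∧
      ∀ n, (∃ i, n ∈ D i) → (univ.filter fun i => n ∈ D i).card = 2 := by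
  choose g hg using fun n => exists_pairing _ (hA n)
  refine ⟨fun i => (A i).image fun a => Nat.pair a (g a i), fun n => n.unpair.1, ?_, ?_, ?_⟩
  · intro i
    rw [image_image]
    simp [Function.comp_def]
  · intro i
    refine card_image_of_injective _ fun a a' h => ?_
    exact (Nat.pair_eq_pair.1 h).1
  · rintro n ⟨i, hi⟩
    obtain ⟨a, ha, rfl⟩ := mem_image.1 hi
    rw [← hg a i (by simpa using ha)]
    congr 1
    ext j
    simp only [mem_filter, mem_univ, true_and, mem_image, Nat.pair_eq_pair]
    constructor
    · rintro ⟨a', h1, rfl, h2⟩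
      exact ⟨h1, h2⟩
    · rintro ⟨h1, h2⟩
      exact ⟨a, h1, rfl, h2⟩

end Split

/-! ### Isomorphism classes of double-coverings -/

section Classes

open Finset

theorem mem_unionC {C : Multiset (Finset ℕ)} {n : ℕ} : n ∈ unionC C ↔ ∃ A ∈ C, n ∈ A := by
  unfold unionC
  induction C using Multiset.induction_on with
  | empty => simp
  | cons a s ih => simp [ih]

theorem unionC_map (C : Multiset (Finset ℕ)) (φ : ℕ → ℕ) :
    unionC (C.map (image φ)) = (unionC C).image φ := by
  ext n
  simp only [mem_unionC, Multiset.mem_map, mem_image]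
  constructor
  · rintro ⟨_, ⟨A, hA, rfl⟩, hn⟩
    obtain ⟨m, hm, rfl⟩ := mem_image.1 hn
    exact ⟨m, ⟨A, hA, hm⟩, rfl⟩
  · rintro ⟨m, ⟨A, hA, hm⟩, rfl⟩
    exact ⟨_, ⟨A, hA, rfl⟩, mem_image_of_mem φ hm⟩

theorem isDoubleCover_map_univ {p : ℕ} {D : Fin p → Finset ℕ} :
    IsDoubleCover ((univ : Finset (Fin p)).val.map D) ↔
      ∀ n, (∃ i, n ∈ D i) → (univ.filter fun i => n ∈ D i).card = 2 := by
  unfold IsDoubleCover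
  simp only [mem_unionC, Multiset.mem_map, Finset.mem_val, mem_univ, true_and,
    exists_exists_eq_and, Multiset.countP_map]
  rfl

theorem exists_eq_map_univ {α : Type*} {p : ℕ} {C : Multiset α} (hC : Multiset.card C = p) :
    ∃ D : Fin p → α, (univ : Finset (Fin p)).val.map D = C := by
  obtain ⟨L, rfl⟩ : ∃ L : List α, (L : Multiset α) = C := ⟨C.toList, C.coe_toList⟩
  rw [Multiset.coe_card] at hC
  subst hC
  exact ⟨L.get, by rw [Fin.univ_val_map, List.ofFn_get]⟩

/-- Two enumerations of the same multiset differ by a permutation of the indices. -/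
theorem exists_perm_of_map_eq {α : Type*} {p : ℕ} {A B : Fin p → α}
    (h : (univ : Finset (Fin p)).val.map A = (univ : Finset (Fin p)).val.map B) :
    ∃ σ : Equiv.Perm (Fin p), ∀ i, B (σ i) = A i := by
  classical
  have hc : ∀ a, Nonempty ({i // A i = a} ≃ {i // B i = a}) := by
    intro a
    have := congrArg (Multiset.countP (· = a)) h
    simp only [Multiset.countP_map] at this
    refine ⟨Fintype.equivOfCardEq ?_⟩
    rw [Fintype.card_subtype, Fintype.card_subtype]
    exact this
  exact ⟨Equiv.ofFiberEquiv fun a => (hc a).some, fun i => Equiv.ofFiberEquiv_map _ i⟩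

theorem exists_map_eq_of_isomorphic {C D : Multiset (Finset ℕ)} (h : Isomorphic C D) :
    ∃ ψ : ℕ → ℕ, D.map (image ψ) = C := by
  obtain ⟨φ, hφ, rfl⟩ := h
  refine ⟨Function.invFunOn φ ↑(unionC C), ?_⟩
  rw [Multiset.map_map]
  conv_rhs => rw [← Multiset.map_id C]
  refine Multiset.map_congr rfl fun A hA => ?_
  rw [Function.comp_apply, image_image, id]
  conv_rhs => rw [← image_id (s := A)]
  refine image_congr fun n hn => ?_
  exact hφ.injOn.leftInvOn_invFunOn (mem_coe.2 (mem_unionC.2 ⟨A, hA, hn⟩))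

/-- The double-coverings counted by `muFull l p`. -/
abbrev DCover (l p : ℕ) : Type :=
  {C : Multiset (Finset ℕ) // Multiset.card C = p ∧ IsDoubleCover C ∧ ∀ A ∈ C, A.card = l}

/-- The isomorphism classes counted by `muFull l p`. -/
abbrev DClass (l p : ℕ) : Type :=
  Quot fun C D : DCover l p => Isomorphic C.1 D.1

/-- Being mapped onto a given set-collection is invariant under isomorphism. -/
theorem exists_map_out {l p : ℕ} (C : DCover l p) {A : Multiset (Finset ℕ)}
    (h : ∃ φ : ℕ → ℕ, C.1.map (image φ) = A) :
    ∃ φ : ℕ → ℕ, (Quot.mk _ C : DClass l p).out.1.map (image φ) = A := by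
  have hcomp : ∀ (B : Multiset (Finset ℕ)) (φ ψ : ℕ → ℕ),
      (B.map (image ψ)).map (image φ) = B.map (image (φ ∘ ψ)) := fun B φ ψ => by
    rw [Multiset.map_map]
    exact Multiset.map_congr rfl fun _ _ => image_image
  let P : DClass l p → Prop := Quot.lift (fun D => ∃ φ : ℕ → ℕ, D.1.map (image φ) = A) (by
    rintro D E hDE
    refine propext ⟨?_, ?_⟩
    · rintro ⟨φ, hφ⟩
      obtain ⟨ψ, hψ⟩ := exists_map_eq_of_isomorphic hDE
      exact ⟨φ ∘ ψ, by rw [← hcomp, hψ, hφ]⟩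
    · rintro ⟨φ, hφ⟩
      obtain ⟨ψ, -, hψ⟩ := hDE
      exact ⟨φ ∘ ψ, by rw [← hcomp, hψ, hφ]⟩)
  have h1 : P (Quot.mk _ C) := h
  rw [← Quot.out_eq (Quot.mk _ C : DClass l p)] at h1
  exact h1

/-- There are finitely many classes, since the union of a double-covering has at most `p * l`
points and can be relabelled into `{0, …, p * l - 1}`. Without this, `muFull` would take the
junk value `0`. -/
theorem finite_dClass (l p : ℕ) : Finite (DClass l p) := by
  have hfin : {C : Multiset (Finset ℕ) | Multiset.card C = p ∧
      ∀ A ∈ C, A ⊆ range (p * l)}.Finite := by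
    refine (Set.finite_Iic (p • (range (p * l)).powerset.val)).subset ?_
    rintro C ⟨hC, hA⟩
    rw [Set.mem_Iic, Multiset.le_iff_count]
    intro A
    by_cases hAC : A ∈ C
    · rw [Multiset.count_nsmul, Multiset.count_eq_one_of_mem (Finset.nodup _)
        (mem_powerset.2 (hA A hAC)), mul_one, ← hC]
      exact Multiset.count_le_card A C
    · rw [Multiset.count_eq_zero_of_notMem hAC]; exact Nat.zero_le _
  have hfin' : Finite {C : DCover l p // ∀ A ∈ C.1, A ⊆ range (p * l)} := by
    have := hfin.to_subtype
    refine Finite.of_injective (β := {C : Multiset (Finset ℕ) | Multiset.card C = p ∧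
      ∀ A ∈ C, A ⊆ range (p * l)}) (fun C => ⟨C.1.1, C.1.2.1, C.2⟩) ?_
    intro C D h
    exact Subtype.ext (Subtype.ext (congrArg (fun X => X.1) h))
  refine Finite.of_surjective
    (fun C : {C : DCover l p // ∀ A ∈ C.1, A ⊆ range (p * l)} => (Quot.mk _ C.1 : DClass l p)) ?_
  rintro ⟨C, hCp, hCd, hCl⟩
  obtain ⟨e, he, him⟩ := exists_enumeration (unionC C)
  have hsub : ∀ A ∈ C, A ⊆ unionC C := fun A hA n hn => mem_unionC.2 ⟨A, hA, hn⟩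
  have hcard : (unionC C).card ≤ p * l := by
    obtain ⟨D, rfl⟩ := exists_eq_map_univ hCp
    have : unionC ((univ : Finset (Fin p)).val.map D) = univ.biUnion D := by
      ext n; simp [mem_unionC]
    rw [this]
    refine (card_biUnion_le_card_mul _ _ l fun i _ => (hCl _ ?_).le).trans (by simp)
    exact Multiset.mem_map_of_mem D (mem_univ i)
  have hdc : IsDoubleCover (C.map (image e)) := by
    intro n hn
    rw [unionC_map] at hn
    obtain ⟨m, hm, rfl⟩ := mem_image.1 hn
    rw [← hCd m hm, Multiset.countP_map, Multiset.countP_eq_card_filter]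
    refine congrArg Multiset.card (Multiset.filter_congr fun A hA => ?_)
    constructor
    · intro h
      obtain ⟨m', hm', h'⟩ := mem_image.1 h
      rwa [← he (hsub A hA hm') hm h']
    · exact mem_image_of_mem e
  refine ⟨⟨⟨C.map (image e), by simpa using hCp, hdc, ?_⟩, ?_⟩, ?_⟩
  · intro B hB
    obtain ⟨A, hA, rfl⟩ := Multiset.mem_map.1 hB
    rw [card_image_of_injOn (he.mono (coe_subset.2 (hsub A hA))), hCl A hA]
  · intro B hB
    obtain ⟨A, hA, rfl⟩ := Multiset.mem_map.1 hB
    refine (image_subset_image (hsub A hA)).trans ?_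
    rw [him]
    exact range_mono hcard
  · refine (Quot.sound ?_).symm
    refine ⟨e, ?_, rfl⟩
    rw [unionC_map, coe_image]
    exact he.bijOn_image

end Classes

/-! ### Assembling the bound -/

section Assembly

open Finset

/-- An `l`-element set is the image of the `l`-element set `D` under at most `l!` of the maps in
the sum, since such a map is fixed off `D` and embeds `D`. -/
theorem sum_gridSet_sq_le {ι : Type*} [Fintype ι] [DecidableEq ι] (T : Finset ℕ) (D : Finset ι)
    (S : Finset (Finset ℕ)) (l : ℕ) (hD : D.card = l) (hS : ∀ A ∈ S, A.card = l)
    (b : Finset ℕ → ℝ) (x : ι → ℕ) :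
    ∑ y ∈ gridSet T D x, (if D.image y ∈ S then |b (D.image y)| else 0) ^ 2 ≤
      l.factorial * ∑ A ∈ S, b A ^ 2 := by
  have e : ∀ y : ι → ℕ, (if D.image y ∈ S then |b (D.image y)| else 0) ^ 2 =
      ∑ A ∈ S, if D.image y = A then b A ^ 2 else 0 := by
    intro y
    rw [sum_ite_eq]
    split_ifs <;> simp
  simp only [e]
  rw [sum_comm, mul_sum]
  refine sum_le_sum fun A hA => ?_
  rw [← sum_filter, sum_const, nsmul_eq_mul]
  refine mul_le_mul_of_nonneg_right ?_ (sq_nonneg _)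
  norm_cast
  have hmem : ∀ y : {y // y ∈ (gridSet T D x).filter fun y => D.image y = A}, D.image y.1 = A :=
    fun y => (mem_filter.1 y.2).2
  have hinj : ∀ y : {y // y ∈ (gridSet T D x).filter fun y => D.image y = A},
      Set.InjOn y.1 D := fun y => by
    rw [← card_image_iff, hmem y, hS A hA, hD]
  have := Fintype.card_le_of_injective
    (fun y : {y // y ∈ (gridSet T D x).filter fun y => D.image y = A} =>
      (⟨fun d => ⟨y.1 d.1, by
          have := mem_image_of_mem y.1 d.2
          rwa [hmem y] at this⟩,
        fun d d' h => Subtype.ext (hinj y d.2 d'.2 (congrArg Subtype.val h))⟩ : D ↪ A)) (by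
      intro y y' h
      refine Subtype.ext (funext fun i => ?_)
      by_cases hi : i ∈ D
      · exact congrArg Subtype.val (DFunLike.congr_fun h ⟨i, hi⟩)
      · rw [(mem_gridSet.1 (mem_filter.1 y.2).1).2 i hi,
          (mem_gridSet.1 (mem_filter.1 y'.2).1).2 i hi])
  rwa [Fintype.card_embedding_eq, Fintype.card_coe, Fintype.card_coe, Fintype.card_coe, hS A hA, hD,
    Nat.descFactorial_self] at this

theorem sum_le_sum_of_cover {α β : Type*} (E : Finset α) (W : Finset β) (h : β → α)
    (hE : ∀ a ∈ E, ∃ w ∈ W, h w = a) (F : α → ℝ) (hF : ∀ a, 0 ≤ F a) :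
    ∑ a ∈ E, F a ≤ ∑ w ∈ W, F (h w) := by
  classical
  refine (sum_le_sum_of_subset_of_nonneg (t := W.image h) (fun a ha => ?_)
    fun a _ _ => hF a).trans (sum_image_le_of_nonneg fun a _ => hF a)
  obtain ⟨w, hw, rfl⟩ := hE a ha
  exact mem_image_of_mem h hw

open Classical in
/-- Every tuple on the left is the image of a representative of some isomorphism class, up to the
order of its `p` members; for a fixed class and a fixed order, `sum_prod_le_prod_sqrt` bounds the
sum over all images. -/
theorem sum_even_le (l p : ℕ) (S : Finset (Finset ℕ)) (hS : ∀ A ∈ S, A.card = l)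
    (b : Finset ℕ → ℝ) :
    ∑ A ∈ (Fintype.piFinset fun _ : Fin p => S) with
        ∀ n, Even (univ.filter fun i => n ∈ A i).card, ∏ i, |b (A i)| ≤
      ((p.factorial * muFull l p : ℕ) : ℝ) *
        (Real.sqrt l.factorial * Real.sqrt (∑ A ∈ S, b A ^ 2)) ^ p := by
  have := finite_dClass l p
  let _ : Fintype (DClass l p) := Fintype.ofFinite _
  set c : Finset ℕ → ℝ := fun A => if A ∈ S then |b A| else 0 with hc
  have hc0 : ∀ A, 0 ≤ c A := fun A => by
    rw [hc]; dsimp only; split_ifs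
    · exact abs_nonneg _
    · exact le_rfl
  choose D hD using fun q : DClass l p => exists_eq_map_univ q.out.2.1
  let U : DClass l p → Finset ℕ := fun q => unionC q.out.1
  -- The member sets of the representative, as sets of points of its union.
  let D' : ∀ q : DClass l p, Fin p → Finset (U q) := fun q i => univ.filter fun u => u.1 ∈ D q i
  have hDmem : ∀ q i, D q i ∈ q.out.1 := fun q i => by
    have h := Multiset.mem_map_of_mem (D q) (mem_univ_val i)
    rwa [hD q] at h
  have hDU : ∀ q i, D q i ⊆ U q := fun q i n hn => mem_unionC.2 ⟨_, hDmem q i, hn⟩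
  have hD'im : ∀ q i, (D' q i).image Subtype.val = D q i := by
    intro q i
    ext n
    simp only [D', mem_image, mem_filter, mem_univ, true_and, Subtype.exists, exists_and_left,
      exists_prop, exists_eq_right_right]
    exact ⟨fun h => h.1, fun h => ⟨h, hDU q i h⟩⟩
  have hD'card : ∀ q i, (D' q i).card = l := by
    intro q i
    rw [← card_image_of_injective _ Subtype.val_injective, hD'im, q.out.2.2.2 _ (hDmem q i)]
  let T : Finset ℕ := S.biUnion id
  let W : Finset (Σ q : DClass l p, Equiv.Perm (Fin p) × (U q → ℕ)) :=
    univ.sigma fun q => univ ×ˢ gridSet T univ (fun _ => 0)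
  have hcongr : ∑ A ∈ (Fintype.piFinset fun _ : Fin p => S) with
        ∀ n, Even (univ.filter fun i => n ∈ A i).card, ∏ i, |b (A i)| =
      ∑ A ∈ (Fintype.piFinset fun _ : Fin p => S) with
        ∀ n, Even (univ.filter fun i => n ∈ A i).card, ∏ i, c (A i) := by
    refine sum_congr rfl fun A hA => prod_congr rfl fun i _ => ?_
    rw [hc]
    exact (if_pos (Fintype.mem_piFinset.1 (mem_filter.1 hA).1 i)).symm
  rw [hcongr]
  refine (sum_le_sum_of_cover _ W (fun w i => (D' w.1 (w.2.1 i)).image w.2.2) ?_ _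
    fun A => prod_nonneg fun _ _ => hc0 _).trans ?_
  · intro A hA
    rw [mem_filter, Fintype.mem_piFinset] at hA
    obtain ⟨hAS, hAe⟩ := hA
    obtain ⟨B, φ, h1, h2, h3⟩ := exists_split A hAe
    let C : DCover l p := ⟨(univ : Finset (Fin p)).val.map B, by simp,
      isDoubleCover_map_univ.2 h3, by
        intro X hX
        obtain ⟨i, -, rfl⟩ := Multiset.mem_map.1 hX
        rw [h2, hS _ (hAS i)]⟩
    obtain ⟨ψ, hψ⟩ := exists_map_out C (A := (univ : Finset (Fin p)).val.map A) ⟨φ, by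
      rw [Multiset.map_map]
      exact Multiset.map_congr rfl fun i _ => h1 i⟩
    set q : DClass l p := Quot.mk _ C
    rw [← hD q, Multiset.map_map] at hψ
    obtain ⟨σ, hσ⟩ := exists_perm_of_map_eq hψ.symm
    have hval : ∀ i, (D' q i).image (fun u => ψ u.1) = (D q i).image ψ := by
      intro i
      rw [← hD'im q i, image_image]
      rfl
    refine ⟨⟨q, σ, fun u => ψ u.1⟩, ?_, ?_⟩
    · simp only [W, mem_sigma, mem_univ, mem_product, true_and]
      rw [mem_gridSet]
      refine ⟨fun u _ => ?_, fun u hu => absurd (mem_univ u) hu⟩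
      -- The point `u` lies in some `D q j`, and `ψ` maps `D q j` onto a member of `S`.
      obtain ⟨X, hX, hu⟩ := mem_unionC.1 u.2
      rw [← hD q] at hX
      obtain ⟨j, -, rfl⟩ := Multiset.mem_map.1 hX
      refine mem_biUnion.2 ⟨A (σ.symm j), hAS _, ?_⟩
      rw [id, ← hσ, Equiv.apply_symm_apply]
      exact mem_image_of_mem ψ hu
    · funext i
      rw [← hσ i]
      exact hval (σ i)
  · rw [sum_sigma]
    simp only [sum_product]
    have hperm : ∀ (q : DClass l p) (σ : Equiv.Perm (Fin p)) (y : U q → ℕ),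
        ∏ i, c ((D' q (σ i)).image y) = ∏ i, c ((D' q i).image y) := fun q σ y =>
      Equiv.prod_comp σ fun i => c ((D' q i).image y)
    simp only [hperm, sum_const, nsmul_eq_mul]
    have hq : ∀ q : DClass l p, ∑ y ∈ gridSet T univ (fun _ => 0), ∏ i, c ((D' q i).image y) ≤
        (Real.sqrt l.factorial * Real.sqrt (∑ A ∈ S, b A ^ 2)) ^ p := by
      intro q
      refine (sum_prod_le_prod_sqrt T (D' q) (fun i y => c ((D' q i).image y)) ?_
        (fun _ _ => hc0 _) ?_ univ (fun _ => 0)).trans ?_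
      · intro i a ha y t
        congr 1
        refine image_congr fun u hu => ?_
        exact Function.update_of_ne (fun h : u = a => ha (h ▸ mem_coe.1 hu)) _ _
      · intro a
        have hdc := q.out.2.2.1
        rw [← hD q, isDoubleCover_map_univ] at hdc
        obtain ⟨X, hX, hu⟩ := mem_unionC.1 a.2
        rw [← hD q] at hX
        obtain ⟨j, -, rfl⟩ := Multiset.mem_map.1 hX
        rw [← hdc a.1 ⟨j, hu⟩]
        congr 1
        ext i
        simp [D']
      · calc _ ≤ ∏ _i : Fin p, (Real.sqrt l.factorial * Real.sqrt (∑ A ∈ S, b A ^ 2)) := by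
              refine prod_le_prod (fun _ _ => Real.sqrt_nonneg _) fun i _ => ?_
              rw [← Real.sqrt_mul (Nat.cast_nonneg _), univ_inter]
              exact Real.sqrt_le_sqrt
                (sum_gridSet_sq_le T (D' q i) S l (hD'card q i) hS b _)
          _ = _ := by simp
    refine (sum_le_sum fun q _ => mul_le_mul_of_nonneg_left (hq q) (Nat.cast_nonneg _)).trans ?_
    rw [sum_const, nsmul_eq_mul, ← mul_assoc]
    have hmu : muFull l p = Fintype.card (DClass l p) := Nat.card_eq_fintype_card
    rw [hmu, card_univ, card_univ, Fintype.card_perm, Fintype.card_fin]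
    push_cast
    rw [mul_comm (p.factorial : ℝ)]

end Assembly

/-- for `l ≥ 2` and even `p ≥ 2`, every finite sequence
`b = (b_A)_{A ∈ Z_l}` satisfies
`‖Σ_A b_A w_A‖_p ≤ √(l!) (p! μ_{l,p}(full))^{1/p} ‖b‖`. -/
theorem stmt16 (l p : ℕ) (hl : 2 ≤ l) (hp : 2 ≤ p) (hpe : Even p)
    (S : Finset (Finset ℕ)) (hS : ∀ A ∈ S, A.card = l ∧ ∀ n ∈ A, 1 ≤ n)
    (b : Finset ℕ → ℝ) :
    (∫ x in (0:ℝ)..1, |∑ A ∈ S, b A * walsh A x| ^ p) ^ ((1 : ℝ) / p) ≤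
      Real.sqrt (Nat.factorial l) *
        ((Nat.factorial p * muFull l p : ℕ) : ℝ) ^ ((1 : ℝ) / p) *
        Real.sqrt (∑ A ∈ S, (b A) ^ 2) := by
  have hI := (integral_pow_le_sum_even hpe S (fun A hA => (hS A hA).2) b).trans
    (sum_even_le l p S (fun A hA => (hS A hA).1) b)
  have hp0 : p ≠ 0 := by omega
  have hI0 : 0 ≤ ∫ x in (0:ℝ)..1, |∑ A ∈ S, b A * walsh A x| ^ p :=
    intervalIntegral.integral_nonneg zero_le_one fun x _ => by positivity
  refine (Real.rpow_le_rpow hI0 hI (by positivity)).trans_eq ?_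
  rw [Real.mul_rpow (by positivity) (by positivity), one_div,
    Real.pow_rpow_inv_natCast (by positivity) hp0]
  ring
end

section
/- (Bonami–Kiener hypercontraction inequality) For every integer l ≥ 2 there exist constants C_l > c_l > 0, depending only on l, such that for every real number p > 2: c_l · p^{l/2} ≤ sup { ‖Σ_{A∈Z_l} b_A w_A‖_p : b a finite real sequence with ‖b‖ ≤ 1 } ≤ C_l · p^{l/2}. -/
/-- The sign vector in `{1, -1}^ℕ` equal to `-1` exactly on `T`; it encodes a point of the
discrete cube by the finite set of its negative coordinates. -/
def signVec (T : Finset ℕ) (k : ℕ) : ℝ := if k ∈ T then -1 else 1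

/-- The first `n` Rademacher functions at `x`, padded by `1` at all other indices. -/
noncomputable def radVec (n : ℕ) (x : ℝ) (k : ℕ) : ℝ :=
  if k ∈ Finset.Icc 1 n then rademacher k x else 1

/-- The vector `(a, s 1, s 2, …)` indexed from `1`; the unused entry at index `0` is set to `1`. -/
def consVec (a : ℝ) (s : ℕ → ℝ) : ℕ → ℝ
  | 0 => 1
  | 1 => a
  | k + 2 => s (k + 1)

/-- The value at the cube point `signVec T` of the multilinear polynomial in the variables indexed
by `V` with coefficients `b`. -/
def cubePoly (b : Finset ℕ → ℝ) (V T : Finset ℕ) : ℝ :=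
  ∑ A ∈ V.powerset, b A * ∏ k ∈ A, signVec T k

/-! ### The Rademacher functions as independent signs -/

lemma rademacher_succ (k : ℕ) (x : ℝ) : rademacher (k + 1) x = rademacher k (2 * x) := by
  unfold rademacher
  congr 2
  ring

lemma rademacher_sub_one (k : ℕ) (x : ℝ) : rademacher (k + 1) (x - 1) = rademacher (k + 1) x := by
  unfold rademacher
  congr 1
  rw [← Real.sin_sub_nat_mul_two_pi (2 ^ (k + 1) * Real.pi * x) (2 ^ k)]
  congr 1
  push_cast
  ring

lemma rademacher_one_left {x : ℝ} (h0 : 0 < x) (h1 : x < 1 / 2) : rademacher 1 x = 1 := by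
  unfold rademacher
  apply Real.sign_of_pos
  apply Real.sin_pos_of_pos_of_lt_pi <;> nlinarith [Real.pi_pos]

lemma rademacher_one_right {x : ℝ} (h0 : 1 / 2 < x) (h1 : x < 1) : rademacher 1 x = -1 := by
  unfold rademacher
  apply Real.sign_of_neg
  rw [← Real.sin_sub_two_pi]
  apply Real.sin_neg_of_neg_of_neg_pi_lt <;> nlinarith [Real.pi_pos]

lemma radVec_left (n : ℕ) {x : ℝ} (h0 : 0 < x) (h1 : x < 1 / 2) :
    radVec (n + 1) x = consVec 1 (radVec n (2 * x)) := by
  funext k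
  match k with
  | 0 => simp [radVec, consVec]
  | 1 => simp [radVec, consVec, rademacher_one_left h0 h1]
  | k + 2 => simp [radVec, consVec, rademacher_succ (k + 1) x]

lemma radVec_right (n : ℕ) {x : ℝ} (h0 : 1 / 2 < x) (h1 : x < 1) :
    radVec (n + 1) x = consVec (-1) (radVec n (2 * x - 1)) := by
  funext k
  match k with
  | 0 => simp [radVec, consVec]
  | 1 => simp [radVec, consVec, rademacher_one_right h0 h1]
  | k + 2 => simp [radVec, consVec, rademacher_succ (k + 1) x, rademacher_sub_one]

lemma signVec_shift {n : ℕ} {T : Finset ℕ} (hT : T ⊆ Finset.Icc 1 n) :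
    signVec (T.image Nat.succ) = consVec 1 (signVec T) := by
  have h0 : 0 ∉ T := fun h => by simpa using hT h
  funext k
  match k with
  | 0 => simp [signVec, consVec]
  | 1 => simp [signVec, consVec, h0]
  | k + 2 => simp [signVec, consVec]

lemma signVec_insert_shift {n : ℕ} {T : Finset ℕ} (hT : T ⊆ Finset.Icc 1 n) :
    signVec (insert 1 (T.image Nat.succ)) = consVec (-1) (signVec T) := by
  have h0 : 0 ∉ T := fun h => by simpa using hT h
  funext k
  match k with
  | 0 => simp [signVec, consVec]
  | 1 => simp [signVec, consVec]
  | k + 2 => simp [signVec, consVec]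

/-- Splitting the sum over `{1, -1}^(n+1)` according to the first sign. -/
lemma sum_cube_succ (n : ℕ) (F : (ℕ → ℝ) → ℝ) :
    ∑ T ∈ (Finset.Icc 1 (n + 1)).powerset, F (signVec T) =
      ∑ T ∈ (Finset.Icc 1 n).powerset, F (consVec 1 (signVec T)) +
      ∑ T ∈ (Finset.Icc 1 n).powerset, F (consVec (-1) (signVec T)) := by
  have hI : Finset.Icc 1 (n + 1) = insert 1 ((Finset.Icc 1 n).image Nat.succ) := by
    ext k
    simp only [Finset.mem_Icc, Finset.mem_insert, Finset.mem_image, Nat.succ_eq_add_one]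
    constructor
    · intro h
      rcases Nat.lt_or_ge 1 k with h1 | h1
      · exact Or.inr ⟨k - 1, by omega, by omega⟩
      · left; omega
    · rintro (h | ⟨a, h, rfl⟩) <;> omega
  have hP : ((Finset.Icc 1 n).image Nat.succ).powerset =
      (Finset.Icc 1 n).powerset.image (Finset.image Nat.succ) := by
    ext T
    simp only [Finset.mem_powerset, Finset.mem_image, Finset.subset_image_iff]
  have hinj : Set.InjOn (Finset.image Nat.succ) ((Finset.Icc 1 n).powerset : Set (Finset ℕ)) :=
    (Finset.image_injective Nat.succ_injective).injOn
  rw [hI, Finset.sum_powerset_insert (by simp), hP, Finset.sum_image hinj, Finset.sum_image hinj]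
  congr 1
  · refine Finset.sum_congr rfl fun T hT => ?_
    rw [signVec_shift (Finset.mem_powerset.1 hT)]
  · refine Finset.sum_congr rfl fun T hT => ?_
    rw [signVec_insert_shift (Finset.mem_powerset.1 hT)]

/-- The first `n` Rademacher functions are independent uniform signs: integrating a function of
them is averaging over the discrete cube. The induction uses the self-similarity of the dyadic
expansion: `r_1` is constant on each half of `[0,1]`, and `r_{k+1}` restricted to a half is a
rescaled copy of `r_k`. -/
lemma integral_radVec (n : ℕ) : ∀ F : (ℕ → ℝ) → ℝ,
    IntervalIntegrable (fun x => F (radVec n x)) MeasureTheory.volume 0 1 ∧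
    ∫ x in (0:ℝ)..1, F (radVec n x) =
      (1 / 2) ^ n * ∑ T ∈ (Finset.Icc 1 n).powerset, F (signVec T) := by
  induction n with
  | zero =>
    intro F
    have h : ∀ x, radVec 0 x = signVec ∅ := fun x => by funext k; simp [radVec, signVec]
    simp [h]
  | succ n ih =>
    intro F
    obtain ⟨i1, e1⟩ := ih fun s => F (consVec 1 s)
    obtain ⟨i2, e2⟩ := ih fun s => F (consVec (-1) s)
    have eq1 : Set.EqOn (fun x => F (consVec 1 (radVec n (2 * x))))
        (fun x => F (radVec (n + 1) x)) (Set.uIoo 0 (1 / 2)) := by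
      intro x hx
      rw [Set.uIoo_of_le (by norm_num)] at hx
      simp only [radVec_left n hx.1 hx.2]
    have eq2 : Set.EqOn (fun x => F (consVec (-1) (radVec n (2 * x - 1))))
        (fun x => F (radVec (n + 1) x)) (Set.uIoo (1 / 2) 1) := by
      intro x hx
      rw [Set.uIoo_of_le (by norm_num)] at hx
      simp only [radVec_right n hx.1 hx.2]
    have j1 : IntervalIntegrable (fun x => F (consVec 1 (radVec n (2 * x))))
        MeasureTheory.volume 0 (1 / 2) := by
      have := i1.comp_mul_left (c := 2)
      simpa using this
    have j2 : IntervalIntegrable (fun x => F (consVec (-1) (radVec n (2 * x - 1))))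
        MeasureTheory.volume (1 / 2) 1 := by
      have := (i2.comp_sub_right 1).comp_mul_left (c := 2)
      norm_num at this ⊢
      exact this
    have k1 := j1.congr_uIoo eq1
    have k2 := j2.congr_uIoo eq2
    refine ⟨k1.trans k2, ?_⟩
    rw [← intervalIntegral.integral_add_adjacent_intervals k1 k2,
      ← intervalIntegral.integral_congr_uIoo eq1, ← intervalIntegral.integral_congr_uIoo eq2,
      intervalIntegral.integral_comp_mul_left (fun y => F (consVec 1 (radVec n y))) two_ne_zero,
      intervalIntegral.integral_comp_mul_sub (fun y => F (consVec (-1) (radVec n y)))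
        two_ne_zero 1]
    norm_num
    norm_num at e1 e2
    rw [e1, e2, sum_cube_succ]
    ring

/-! ### Hypercontractivity on the discrete cube -/

/-- One step of the two-point inequality. With `S m = (a+b)^(2m) + (a-b)^(2m)`, the induction rests
on the recurrence `S (m+2) = 2 (a² + b²) S (m+1) - (a² - b²)² S m`. -/
lemma two_point_step (a b : ℝ) (m : ℕ) :
    ((a + b) ^ 2) ^ (m + 1) + ((a - b) ^ 2) ^ (m + 1) ≤
      (a ^ 2 + (4 * m + 1) * b ^ 2) * (((a + b) ^ 2) ^ m + ((a - b) ^ 2) ^ m) := by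
  induction m with
  | zero => norm_num; nlinarith
  | succ m ih =>
    set s := ((a + b) ^ 2) ^ m + ((a - b) ^ 2) ^ m with hs
    set t := ((a + b) ^ 2) ^ (m + 1) + ((a - b) ^ 2) ^ (m + 1) with ht
    have hs0 : 0 ≤ s := by positivity
    have ht0 : 0 ≤ t := by positivity
    have hrec : ((a + b) ^ 2) ^ (m + 1 + 1) + ((a - b) ^ 2) ^ (m + 1 + 1) =
        2 * (a ^ 2 + b ^ 2) * t - (a ^ 2 - b ^ 2) ^ 2 * s := by
      rw [hs, ht]; ring
    have key : (a ^ 2 - (4 * m + 3) * b ^ 2) * t ≤ (a ^ 2 - b ^ 2) ^ 2 * s := by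
      rcases le_or_gt (a ^ 2 - (4 * m + 3) * b ^ 2) 0 with hc | hc
      · exact (mul_nonpos_of_nonpos_of_nonneg hc ht0).trans (by positivity)
      · refine (mul_le_mul_of_nonneg_left ih hc.le).trans ?_
        rw [← mul_assoc]
        refine mul_le_mul_of_nonneg_right ?_ hs0
        have : 0 ≤ ((4 * m + 3) * (4 * m + 1) + 1) * b ^ 4 := by positivity
        nlinarith
    rw [hrec]
    push_cast
    linarith

lemma two_point (a b K : ℝ) (m : ℕ) (hK : 4 * m ≤ K) :
    (a + b) ^ (2 * m) + (a - b) ^ (2 * m) ≤ 2 * (a ^ 2 + K * b ^ 2) ^ m := by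
  rw [pow_mul, pow_mul]
  induction m with
  | zero => norm_num
  | succ m ih =>
    push_cast at hK
    have hm : (0 : ℝ) ≤ m := m.cast_nonneg
    have hb := sq_nonneg b
    refine (two_point_step a b m).trans ?_
    have h1 : a ^ 2 + (4 * m + 1) * b ^ 2 ≤ a ^ 2 + K * b ^ 2 := by nlinarith
    have h2 := ih (by linarith)
    have h0 : 0 ≤ a ^ 2 + K * b ^ 2 := le_trans (by positivity) h1
    calc _ ≤ (a ^ 2 + K * b ^ 2) * (2 * (a ^ 2 + K * b ^ 2) ^ m) :=
          mul_le_mul h1 h2 (by positivity) h0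
      _ = _ := by ring

/-- Minkowski's inequality in `ℓ^m`, in a form without roots. -/
lemma minkowski_pow {ι : Type*} (s : Finset ι) (u v : ι → ℝ) (hu : ∀ i, 0 ≤ u i)
    (hv : ∀ i, 0 ≤ v i) {N A B : ℝ} (hN : 0 ≤ N) (hA : 0 ≤ A) (hB : 0 ≤ B) {m : ℕ} (hm : 1 ≤ m)
    (h1 : ∑ i ∈ s, u i ^ m ≤ N * A ^ m) (h2 : ∑ i ∈ s, v i ^ m ≤ N * B ^ m) :
    ∑ i ∈ s, (u i + v i) ^ m ≤ N * (A + B) ^ m := by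
  have hm0 : m ≠ 0 := by omega
  have hmR : (1 : ℝ) ≤ m := by exact_mod_cast hm
  have hroot : ∀ {X Y : ℝ}, 0 ≤ X → 0 ≤ Y → X ≤ N * Y ^ m →
      X ^ (1 / (m : ℝ)) ≤ N ^ (1 / (m : ℝ)) * Y := by
    intro X Y hX hY h
    calc X ^ (1 / (m : ℝ)) ≤ (N * Y ^ m) ^ (1 / (m : ℝ)) :=
          Real.rpow_le_rpow hX h (by positivity)
      _ = _ := by
          rw [Real.mul_rpow hN (by positivity), one_div, Real.pow_rpow_inv_natCast hY hm0]
  have hmink := Real.Lp_add_le_of_nonneg s (f := u) (g := v) hmR (fun i _ => hu i) fun i _ => hv i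
  simp only [Real.rpow_natCast] at hmink
  have hUV : 0 ≤ ∑ i ∈ s, (u i + v i) ^ m :=
    Finset.sum_nonneg fun i _ => pow_nonneg (add_nonneg (hu i) (hv i)) m
  have h3 : (∑ i ∈ s, (u i + v i) ^ m) ^ (1 / (m : ℝ)) ≤ N ^ (1 / (m : ℝ)) * (A + B) := by
    rw [mul_add]
    exact hmink.trans (add_le_add
      (hroot (Finset.sum_nonneg fun i _ => pow_nonneg (hu i) m) hA h1)
      (hroot (Finset.sum_nonneg fun i _ => pow_nonneg (hv i) m) hB h2))
  have h4 := pow_le_pow_left₀ (Real.rpow_nonneg hUV _) h3 m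
  rwa [mul_pow, one_div, Real.rpow_inv_natCast_pow hUV hm0, Real.rpow_inv_natCast_pow hN hm0] at h4

lemma signVec_insert_of_ne {k j : ℕ} (h : j ≠ k) (T : Finset ℕ) :
    signVec (insert k T) j = signVec T j := by
  simp [signVec, h]

lemma cubePoly_insert {k : ℕ} {V T : Finset ℕ} (b : Finset ℕ → ℝ) (hk : k ∉ V) (hT : T ⊆ V) :
    cubePoly b (insert k V) T = cubePoly b V T + cubePoly (fun A => b (insert k A)) V T := by
  unfold cubePoly
  rw [Finset.sum_powerset_insert hk]
  congr 1
  refine Finset.sum_congr rfl fun A hA => ?_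
  have hkA : k ∉ A := fun h => hk (Finset.mem_powerset.1 hA h)
  have hkT : k ∉ T := fun h => hk (hT h)
  simp [Finset.prod_insert hkA, signVec, hkT]

lemma cubePoly_insert_insert {k : ℕ} {V T : Finset ℕ} (b : Finset ℕ → ℝ) (hk : k ∉ V) :
    cubePoly b (insert k V) (insert k T) =
      cubePoly b V T - cubePoly (fun A => b (insert k A)) V T := by
  unfold cubePoly
  rw [Finset.sum_powerset_insert hk, sub_eq_add_neg, ← Finset.sum_neg_distrib]
  have hprod : ∀ A ∈ V.powerset, ∏ j ∈ A, signVec (insert k T) j = ∏ j ∈ A, signVec T j := by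
    intro A hA
    refine Finset.prod_congr rfl fun j hj => signVec_insert_of_ne ?_ T
    rintro rfl
    exact hk (Finset.mem_powerset.1 hA hj)
  congr 1
  · exact Finset.sum_congr rfl fun A hA => by rw [hprod A hA]
  · refine Finset.sum_congr rfl fun A hA => ?_
    have hkA : k ∉ A := fun h => hk (Finset.mem_powerset.1 hA h)
    have hs : signVec (insert k T) k = -1 := by simp [signVec]
    rw [Finset.prod_insert hkA, hprod A hA, hs]
    ring

/-- Bonami's hypercontractive inequality `‖f‖_{2m} ≤ ‖∑ K^{|A|/2} b_A w_A‖_2` on the discrete cube,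
for even integer exponents and with `K ≥ 4m`. Adding the variable `k` writes `f = g + ε_k h`; the
two-point inequality is applied in `ε_k` and Minkowski's inequality in the other variables. -/
lemma hypercontractive (m : ℕ) (hm : 1 ≤ m) (K : ℝ) (hK : 4 * m ≤ K) (V : Finset ℕ) :
    ∀ b : Finset ℕ → ℝ, ∑ T ∈ V.powerset, cubePoly b V T ^ (2 * m) ≤
      2 ^ V.card * (∑ A ∈ V.powerset, K ^ A.card * b A ^ 2) ^ m := by
  have hK0 : 0 ≤ K := le_trans (by positivity) hK
  induction V using Finset.induction_on with
  | empty => intro b; simp [cubePoly, pow_mul]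
  | insert k V hk ih =>
    intro b
    set b' : Finset ℕ → ℝ := fun A => b (insert k A) with hb'
    set P := ∑ A ∈ V.powerset, K ^ A.card * b A ^ 2 with hP
    set Q := ∑ A ∈ V.powerset, K ^ A.card * b' A ^ 2 with hQ
    have hP0 : 0 ≤ P := Finset.sum_nonneg fun A _ => by positivity
    have hQ0 : 0 ≤ Q := Finset.sum_nonneg fun A _ => by positivity
    have hsum : ∑ A ∈ (insert k V).powerset, K ^ A.card * b A ^ 2 = P + K * Q := by
      rw [Finset.sum_powerset_insert hk, hQ, Finset.mul_sum]
      congr 1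
      refine Finset.sum_congr rfl fun A hA => ?_
      rw [Finset.card_insert_of_notMem fun h => hk (Finset.mem_powerset.1 hA h), pow_succ]
      simp only [hb']
      ring
    have hmink := minkowski_pow V.powerset (fun T => cubePoly b V T ^ 2)
      (fun T => K * cubePoly b' V T ^ 2) (fun _ => by positivity) (fun _ => by positivity)
      (N := 2 ^ V.card) (A := P) (B := K * Q) (by positivity) hP0 (by positivity) hm
      (by simpa only [← pow_mul] using ih b)
      (by
        have := mul_le_mul_of_nonneg_left (ih b') (pow_nonneg hK0 m)
        simp only [mul_pow, ← pow_mul, ← Finset.mul_sum]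
        refine this.trans (le_of_eq ?_)
        ring)
    rw [hsum, Finset.sum_powerset_insert hk, ← Finset.sum_add_distrib,
      Finset.card_insert_of_notMem hk]
    calc _ ≤ ∑ T ∈ V.powerset, 2 * (cubePoly b V T ^ 2 + K * cubePoly b' V T ^ 2) ^ m := by
          refine Finset.sum_le_sum fun T hT => ?_
          rw [cubePoly_insert b hk (Finset.mem_powerset.1 hT), cubePoly_insert_insert b hk]
          exact two_point _ _ K m hK
      _ ≤ 2 * (2 ^ V.card * (P + K * Q) ^ m) := by
          rw [← Finset.mul_sum]
          exact mul_le_mul_of_nonneg_left hmink zero_le_two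
      _ = _ := by ring

/-! ### Transfer to Walsh polynomials and the two bounds -/

/-- The `p`-th moment of a Walsh polynomial in the first `n` Rademacher functions, as an average
over the discrete cube. -/
lemma integral_walsh_sum (S : Finset (Finset ℕ)) (b : Finset ℕ → ℝ) (n : ℕ)
    (hS : ∀ A ∈ S, A ⊆ Finset.Icc 1 n) (p : ℝ) :
    ∫ x in (0:ℝ)..1, |∑ A ∈ S, b A * walsh A x| ^ p =
      (1 / 2) ^ n * ∑ T ∈ (Finset.Icc 1 n).powerset,
        |∑ A ∈ S, b A * ∏ k ∈ A, signVec T k| ^ p := by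
  rw [← (integral_radVec n fun s => |∑ A ∈ S, b A * ∏ k ∈ A, s k| ^ p).2]
  congr 1
  funext x
  congr 2
  refine Finset.sum_congr rfl fun A hA => ?_
  unfold walsh
  congr 1
  refine Finset.prod_congr rfl fun k hk => ?_
  simp only [radVec, if_pos (hS A hA hk)]

/-- The upper bound. The real exponent `p` is raised to the even integer `2⌈p⌉` by Jensen's
inequality; `K = 8p` is admissible in `hypercontractive` because `4⌈p⌉ ≤ 8p`. -/
lemma norm_le_of_degree (l : ℕ) (p : ℝ) (hp : 2 < p) (S : Finset (Finset ℕ)) (b : Finset ℕ → ℝ)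
    (hS : ∀ A ∈ S, A.card = l ∧ ∀ n ∈ A, 1 ≤ n) (hb : ∑ A ∈ S, b A ^ 2 ≤ 1) :
    (∫ x in (0:ℝ)..1, |∑ A ∈ S, b A * walsh A x| ^ p) ^ (1 / p) ≤ (8 * p) ^ ((l : ℝ) / 2) := by
  obtain ⟨n, hn⟩ : ∃ n, ∀ A ∈ S, A ⊆ Finset.Icc 1 n := by
    refine ⟨(S.sup id).sup id, fun A hA k hk => Finset.mem_Icc.2 ⟨(hS A hA).2 k hk, ?_⟩⟩
    exact Finset.le_sup (f := id) (Finset.mem_sup.2 ⟨A, hA, hk⟩)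
  rw [integral_walsh_sum S b n hn p]
  set V := Finset.Icc 1 n with hV
  have hp0 : 0 < p := by linarith
  set m := ⌈p⌉₊ with hmdef
  have hmp : p ≤ m := Nat.le_ceil p
  have hmp' : (m : ℝ) < p + 1 := Nat.ceil_lt_add_one hp0.le
  have hm : 1 ≤ m := Nat.one_le_iff_ne_zero.2 fun h => by
    rw [h, Nat.cast_zero] at hmp
    linarith
  set f : Finset ℕ → ℝ := fun T => ∑ A ∈ S, b A * ∏ k ∈ A, signVec T k with hf
  have hSV : S ⊆ V.powerset := fun A hA => Finset.mem_powerset.2 (hn A hA)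
  -- extend the coefficients by zero outside `S`
  have hfc : ∀ T, cubePoly (fun A => if A ∈ S then b A else 0) V T = f T := by
    intro T
    unfold cubePoly
    rw [hf, ← Finset.sum_subset hSV]
    · exact Finset.sum_congr rfl fun A hA => by simp only [if_pos hA]
    · intro A _ hA
      simp only [if_neg hA, zero_mul]
  have hcard : V.card = n := by simp [hV]
  have hyp : ∑ T ∈ V.powerset, f T ^ (2 * m) ≤ 2 ^ n * ((8 * p) ^ l) ^ m := by
    have h := hypercontractive m hm (8 * p) (by linarith) V fun A => if A ∈ S then b A else 0
    simp only [hfc, hcard] at h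
    refine h.trans (mul_le_mul_of_nonneg_left (pow_le_pow_left₀ ?_ ?_ m) (by positivity))
    · exact Finset.sum_nonneg fun A _ => by positivity
    · rw [← Finset.sum_subset hSV]
      · calc _ = ∑ A ∈ S, (8 * p) ^ l * b A ^ 2 :=
              Finset.sum_congr rfl fun A hA => by rw [if_pos hA, (hS A hA).1]
          _ ≤ (8 * p) ^ l := by
              rw [← Finset.mul_sum]
              exact mul_le_of_le_one_right (by positivity) hb
      · intro A _ hA
        simp [hA]
  have hm2 : (0 : ℝ) < 2 * m := by linarith
  have hjensen := Real.rpow_arith_mean_le_arith_mean_rpow V.powerset (fun _ => (1 / 2 : ℝ) ^ n)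
    (fun T => |f T| ^ p) (fun _ _ => by positivity)
    (by
      rw [Finset.sum_const, Finset.card_powerset, hcard, nsmul_eq_mul]
      push_cast
      rw [← mul_pow]
      norm_num)
    (fun _ _ => by positivity) (p := 2 * m / p) (by rw [one_le_div hp0]; linarith)
  rw [← Finset.mul_sum, ← Finset.mul_sum] at hjensen
  have hpow : ∀ T, (|f T| ^ p) ^ (2 * m / p) = f T ^ (2 * m) := by
    intro T
    rw [← Real.rpow_mul (abs_nonneg _), mul_div_cancel₀ _ hp0.ne']
    rw [show (2 * m : ℝ) = ((2 * m : ℕ) : ℝ) by push_cast; ring, Real.rpow_natCast]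
    exact (even_two_mul m).pow_abs _
  simp only [hpow] at hjensen
  set I := (1 / 2 : ℝ) ^ n * ∑ T ∈ V.powerset, |f T| ^ p with hI
  have hI0 : 0 ≤ I := mul_nonneg (by positivity) (Finset.sum_nonneg fun _ _ => by positivity)
  have h1 : I ^ (2 * m / p) ≤ ((8 * p) ^ l) ^ m := by
    refine hjensen.trans ((mul_le_mul_of_nonneg_left hyp (by positivity)).trans (le_of_eq ?_))
    rw [← mul_assoc, ← mul_pow]
    norm_num
  have h2 := Real.rpow_le_rpow (by positivity) h1 (z := 1 / (2 * m)) (by positivity)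
  rw [← Real.rpow_mul hI0, ← pow_mul, ← Real.rpow_natCast, ← Real.rpow_mul (by positivity)] at h2
  convert h2 using 2
  · field_simp
  · push_cast
    field_simp

/-- The lower bound. The normalised elementary symmetric polynomial of degree `l` in `n = l + ⌈p⌉`
Rademacher functions takes the value `√(n choose l) ≥ p^(l/2) / √(l!)` where all of them equal `1`,
a set of measure `2^(-n)`, and `2^(-n/p)` is bounded below. -/
lemma exists_large_norm (l : ℕ) (p : ℝ) (hp : 2 < p) :
    ∃ (S : Finset (Finset ℕ)) (b : Finset ℕ → ℝ),
      (∀ A ∈ S, A.card = l ∧ ∀ n ∈ A, 1 ≤ n) ∧ (∑ A ∈ S, (b A) ^ 2) ≤ 1 ∧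
      (1 / 2) ^ (l + 2) / √(l.factorial) * p ^ ((l : ℝ) / 2) ≤
        (∫ x in (0:ℝ)..1, |∑ A ∈ S, b A * walsh A x| ^ p) ^ (1 / p) := by
  have hp0 : 0 < p := by linarith
  set N := ⌈p⌉₊ with hN
  have hNp : p ≤ N := Nat.le_ceil p
  have hNp' : (N : ℝ) < p + 1 := Nat.ceil_lt_add_one hp0.le
  set n := l + N with hn
  set D := (n.choose l : ℝ) with hD
  have hD0 : 0 < D := by
    rw [hD]
    exact_mod_cast Nat.choose_pos (by omega)
  have hsD : 0 < √D := Real.sqrt_pos.2 hD0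
  have hS : ∀ A ∈ Finset.powersetCard l (Finset.Icc 1 n), A ⊆ Finset.Icc 1 n := fun A hA =>
    (Finset.mem_powersetCard.1 hA).1
  have hcard : ((Finset.powersetCard l (Finset.Icc 1 n)).card : ℝ) = D := by
    simp [hD]
  refine ⟨Finset.powersetCard l (Finset.Icc 1 n), fun _ => 1 / √D, fun A hA =>
    ⟨(Finset.mem_powersetCard.1 hA).2, fun k hk => (Finset.mem_Icc.1 (hS A hA hk)).1⟩, ?_, ?_⟩
  · rw [Finset.sum_const, nsmul_eq_mul, hcard, div_pow, Real.sq_sqrt hD0.le, one_pow,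
      mul_one_div_cancel hD0.ne']
  · rw [integral_walsh_sum _ _ n hS p]
    have hval : ∑ A ∈ Finset.powersetCard l (Finset.Icc 1 n),
        1 / √D * ∏ k ∈ A, signVec ∅ k = √D := by
      have h1 : ∀ A : Finset ℕ, ∏ k ∈ A, signVec ∅ k = 1 := fun A => by simp [signVec]
      simp only [h1, mul_one]
      rw [Finset.sum_const, nsmul_eq_mul, hcard, mul_one_div, Real.div_sqrt]
    have hterm : √D ^ p ≤ ∑ T ∈ (Finset.Icc 1 n).powerset,
        |∑ A ∈ Finset.powersetCard l (Finset.Icc 1 n),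
          1 / √D * ∏ k ∈ A, signVec T k| ^ p := by
      have h := Finset.single_le_sum (s := (Finset.Icc 1 n).powerset)
        (f := fun T => |∑ A ∈ Finset.powersetCard l (Finset.Icc 1 n),
          1 / √D * ∏ k ∈ A, signVec T k| ^ p) (fun _ _ => by positivity)
        (Finset.empty_mem_powerset _)
      simp only [hval, abs_of_pos hsD] at h
      exact h
    have hroot : ((1 / 2 : ℝ) ^ n * √D ^ p) ^ (1 / p) = (1 / 2 : ℝ) ^ ((n : ℝ) / p) * √D := by
      rw [Real.mul_rpow (by positivity) (by positivity), ← Real.rpow_natCast,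
        ← Real.rpow_mul (by positivity), ← Real.rpow_mul hsD.le, mul_one_div, mul_one_div,
        div_self hp0.ne', Real.rpow_one]
    have hhalf : (1 / 2 : ℝ) ^ (l + 2) ≤ (1 / 2 : ℝ) ^ ((n : ℝ) / p) := by
      rw [← Real.rpow_natCast]
      refine Real.rpow_le_rpow_of_exponent_ge (by norm_num) (by norm_num) ?_
      rw [div_le_iff₀ hp0, hn]
      push_cast
      have : (0 : ℝ) ≤ l := l.cast_nonneg
      nlinarith
    have hchoose : p ^ ((l : ℝ) / 2) / √(l.factorial) ≤ √D := by
      have h1 : p ^ ((l : ℝ) / 2) = √(p ^ l) := by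
        rw [Real.sqrt_eq_rpow, ← Real.rpow_natCast, ← Real.rpow_mul hp0.le, mul_one_div]
      rw [h1, ← Real.sqrt_div (by positivity)]
      refine Real.sqrt_le_sqrt (le_trans ?_ (Nat.pow_le_choose (α := ℝ) l n))
      refine div_le_div_of_nonneg_right (pow_le_pow_left₀ hp0.le ?_ l) (by positivity)
      refine hNp.trans ?_
      exact_mod_cast (by omega : N ≤ n + 1 - l)
    calc _ = (1 / 2 : ℝ) ^ (l + 2) * (p ^ ((l : ℝ) / 2) / √(l.factorial)) := by ring
      _ ≤ (1 / 2 : ℝ) ^ ((n : ℝ) / p) * √D :=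
          mul_le_mul hhalf hchoose (by positivity) (by positivity)
      _ = _ := hroot.symm
      _ ≤ _ := Real.rpow_le_rpow (by positivity)
          (mul_le_mul_of_nonneg_left hterm (by positivity)) (by positivity)

/-- Bonami–Kiener: for every `l ≥ 2` there are constants
`C_l > c_l > 0` such that for every real `p > 2`,
`c_l p^{l/2} ≤ sup_{‖b‖ ≤ 1} ‖Σ_{A ∈ Z_l} b_A w_A‖_p ≤ C_l p^{l/2}`. -/
theorem stmt18 (l : ℕ) (hl : 2 ≤ l) :
    ∃ c C : ℝ, 0 < c ∧ c < C ∧ ∀ p : ℝ, 2 < p →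
      c * p ^ ((l : ℝ) / 2) ≤
        sSup {y : ℝ | ∃ (S : Finset (Finset ℕ)) (b : Finset ℕ → ℝ),
          (∀ A ∈ S, A.card = l ∧ ∀ n ∈ A, 1 ≤ n) ∧
          (∑ A ∈ S, (b A) ^ 2) ≤ 1 ∧
          y = (∫ x in (0:ℝ)..1, |∑ A ∈ S, b A * walsh A x| ^ p) ^ (1 / p)} ∧
      sSup {y : ℝ | ∃ (S : Finset (Finset ℕ)) (b : Finset ℕ → ℝ),
          (∀ A ∈ S, A.card = l ∧ ∀ n ∈ A, 1 ≤ n) ∧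
          (∑ A ∈ S, (b A) ^ 2) ≤ 1 ∧
          y = (∫ x in (0:ℝ)..1, |∑ A ∈ S, b A * walsh A x| ^ p) ^ (1 / p)} ≤
        C * p ^ ((l : ℝ) / 2) := by
  have hfac : (1 : ℝ) ≤ √(l.factorial) := by
    rw [Real.one_le_sqrt]
    exact_mod_cast l.factorial_pos
  refine ⟨(1 / 2) ^ (l + 2) / √(l.factorial), 8 ^ ((l : ℝ) / 2), by positivity, ?_,
    fun p hp => ?_⟩
  · have h1 : (1 / 2 : ℝ) ^ (l + 2) / √(l.factorial) < 1 := by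
      rw [div_lt_one (by linarith)]
      exact (pow_lt_one₀ (by norm_num) (by norm_num) (by omega)).trans_le hfac
    exact h1.trans_le (Real.one_le_rpow (by norm_num) (by positivity))
  · have hp0 : 0 ≤ p := by linarith
    rw [← Real.mul_rpow (by norm_num) hp0]
    constructor
    · obtain ⟨S, b, hS, hb, hle⟩ := exists_large_norm l p hp
      refine hle.trans (le_csSup ⟨(8 * p) ^ ((l : ℝ) / 2), ?_⟩ ⟨S, b, hS, hb, rfl⟩)
      rintro y ⟨S, b, hS, hb, rfl⟩
      exact norm_le_of_degree l p hp S b hS hb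
    · refine Real.sSup_le ?_ (by positivity)
      rintro y ⟨S, b, hS, hb, rfl⟩
      exact norm_le_of_degree l p hp S b hS hb
end
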